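/- arXiv:2302.08925 — 2 statements merged into one kernel-verified Lean document; each statement's English description precedes it below -/
import Mathlib

section
/- Let m ≥ 1. Let φ : {0,…,m} → ℝ with φ_0 = 0, ψ : {1,…,m} → ℝ, and g : {1,…,m} → ℝ with g_i ≠ 0 for all i. Set η_i = ψ_i − φ_{i−1} and θ_i = φ_i − ψ_i, and assume η_i, θ_i ∈ (−π/2, π/2) and sin(η_i + θ_i) ≠ 0 for all 1 ≤ i ≤ m. Define τ_i = ∑_{α=1}^{i} g_α · (−sin ψ_α, cos ψ_α) ∈ ℝ² for 0 ≤ i ≤ m and lines L_i = { τ_i + s·(cos φ_i, sin φ_i) : s ∈ ℝ }. Then there exists a point p ∈ ℝ² lying on L_i for all 0 ≤ i ≤ m if and only if g_i / g_1 = ( sin(η_i+θ_i) · cos θ_1 · C_i ) / ( sin(η_1+θ_1) · cos η_i ) for all 1 ≤ i ≤ m, where C_i = ∏_{α=1}^{i} (cos η_α / cos θ_α). -/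
open Real Finset

/-- A vector in the Euclidean plane `ℝ²` given by its two coordinates. -/
noncomputable def e2 (x y : ℝ) : EuclideanSpace ℝ (Fin 2) := !₂[x, y]

/-! A common point of the profile lines is recorded by its signed position `s i` on each line `L i`.
In the orthonormal frame attached to the edge from `τ (i - 1)` to `τ i`, agreement of the positions
on `L (i - 1)` and `L i` splits into two scalar equations: one is a first-order recurrence making
`s i` a multiple of `C i`, the other expresses `g i` as `s (i - 1)` times a known factor. So the
lines are concurrent iff the edge lengths `g i` are proportional to explicit weights, which is the
stated family of ratios. -/

lemma exists_forall_le_eq_iff_exists_forall_lt {S X : Type*} [Nonempty S] (f : ℕ → S → X) (m : ℕ) :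
    (∃ p, ∀ i ≤ m, ∃ s, p = f i s) ↔
      ∃ s : ℕ → S, ∀ i < m, f i (s i) = f (i + 1) (s (i + 1)) := by
  constructor
  · rintro ⟨p, hp⟩
    choose! s hs using hp
    exact ⟨s, fun i hi => (hs i hi.le).symm.trans (hs (i + 1) hi)⟩
  · rintro ⟨s, hs⟩
    refine ⟨f 0 (s 0), fun i hi => ⟨s i, ?_⟩⟩
    induction i with
    | zero => rfl
    | succ i ih => exact (ih (Nat.le_of_succ_le hi)).trans (hs i hi)

lemma forall_mem_Icc_one_iff {P : ℕ → Prop} {m : ℕ} :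
    (∀ i ∈ Icc 1 m, P i) ↔ ∀ i < m, P (i + 1) := by
  refine ⟨fun h i hi => h _ (mem_Icc.2 ⟨i.succ_pos, hi⟩), fun h i hi => ?_⟩
  obtain ⟨h1, him⟩ := mem_Icc.1 hi
  simpa only [Nat.sub_add_cancel h1] using h (i - 1) (by omega)

lemma prod_Icc_one_eq_prod_range {M : Type*} [CommMonoid M] (f : ℕ → M) (n : ℕ) :
    ∏ i ∈ Icc 1 n, f i = ∏ i ∈ range n, f (i + 1) := by
  rw [range_eq_Ico, prod_Ico_add' f 0 n 1]
  rfl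

section Field

variable {K : Type*} [Field K]

lemma exists_forall_eq_mul_iff_forall_div_eq {ι : Type*} {P : ι → Prop} {g w : ι → K} {k : ι}
    (hk : P k) (hg : g k ≠ 0) :
    (∃ c, ∀ i, P i → g i = c * w i) ↔ ∀ i, P i → g i / g k = w i / w k := by
  constructor
  · rintro ⟨c, hc⟩ i hi
    have hc0 : c ≠ 0 := left_ne_zero_of_mul (hc k hk ▸ hg)
    rw [hc i hi, hc k hk, mul_div_mul_left _ _ hc0]
  · refine fun h => ⟨g k / w k, fun i hi => ?_⟩
    rw [div_mul_eq_mul_div, mul_div_assoc, ← h i hi, mul_div_cancel₀ _ hg]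

lemma forall_mul_eq_mul_iff_eq_mul_prod {m : ℕ} {s a c : ℕ → K} (hc : ∀ i < m, c i ≠ 0) :
    (∀ i < m, s i * a i = s (i + 1) * c i) ↔
      ∀ i ≤ m, s i = s 0 * ∏ j ∈ range i, (a j / c j) := by
  constructor
  · intro h i hi
    induction i with
    | zero => simp
    | succ i ih =>
      rw [prod_range_succ, ← mul_assoc, ← ih (Nat.le_of_succ_le hi), ← mul_div_assoc, h i hi,
        mul_div_cancel_right₀ _ (hc i hi)]
  · intro h i hi
    rw [h (i + 1) hi, prod_range_succ, ← mul_assoc, ← h i hi.le, mul_assoc,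
      div_mul_cancel₀ _ (hc i hi)]

variable {V : Type*} [AddCommGroup V] [Module K V]

lemma smul_pair_eq_smul_add_smul_pair_iff {u v : V} (huv : LinearIndependent K ![u, v])
    {a b c d s t g : K} (hc : c ≠ 0) :
    s • (a • u + b • v) = g • v + t • (c • u + d • v) ↔
      s * a = t * c ∧ g * c = s * (b * c - a * d) := by
  have coords : s • (a • u + b • v) = g • v + t • (c • u + d • v) ↔
      s * a = t * c ∧ s * b = g + t * d := by
    have hl : s • (a • u + b • v) = (s * a) • u + (s * b) • v := by module
    have hr : g • v + t • (c • u + d • v) = (t * c) • u + (g + t * d) • v := by module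
    rw [hl, hr]
    exact ⟨huv.eq_of_pair, fun ⟨h₁, h₂⟩ => by rw [h₁, h₂]⟩
  rw [coords, and_congr_right_iff]
  intro hu
  rw [← mul_left_inj' hc]
  constructor <;> intro hv <;> linear_combination d * hu - hv

/-- The position of the common point on the `i`-th line is `k * ∏ j ∈ range i, a j / c j`. -/
theorem exists_common_point_iff_exists_forall_eq_mul {m : ℕ} {x r u v : ℕ → V}
    {g a b c d : ℕ → K}
    (hx : ∀ i < m, x (i + 1) = x i + g i • v i)
    (huv : ∀ i < m, LinearIndependent K ![u i, v i])
    (hr : ∀ i < m, r i = a i • u i + b i • v i)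
    (hr' : ∀ i < m, r (i + 1) = c i • u i + d i • v i)
    (hc : ∀ i < m, c i ≠ 0) :
    (∃ p, ∀ i ≤ m, ∃ s : K, p = x i + s • r i) ↔
      ∃ k, ∀ i < m, g i = k * ((b i * c i - a i * d i) / c i * ∏ j ∈ range i, (a j / c j)) := by
  have step (s : ℕ → K) (i : ℕ) (hi : i < m) :
      x i + s i • r i = x (i + 1) + s (i + 1) • r (i + 1) ↔
        s i * a i = s (i + 1) * c i ∧ g i * c i = s i * (b i * c i - a i * d i) := by
    rw [hx i hi, hr i hi, hr' i hi, add_assoc, add_right_inj,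
      smul_pair_eq_smul_add_smul_pair_iff (huv i hi) (hc i hi)]
  have edge (k : K) (i : ℕ) (hi : i < m) :
      g i = k * ((b i * c i - a i * d i) / c i * ∏ j ∈ range i, (a j / c j)) ↔
        g i * c i = (k * ∏ j ∈ range i, (a j / c j)) * (b i * c i - a i * d i) := by
    rw [← eq_div_iff (hc i hi)]
    ring_nf
  simp only [exists_forall_le_eq_iff_exists_forall_lt (fun i (s : K) => x i + s • r i)]
  constructor
  · rintro ⟨s, hs⟩
    have hs' := fun i hi => (step s i hi).1 (hs i hi)
    have hprod := (forall_mul_eq_mul_iff_eq_mul_prod hc).1 fun i hi => (hs' i hi).1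
    exact ⟨s 0, fun i hi => (edge _ i hi).2 (hprod i hi.le ▸ (hs' i hi).2)⟩
  · rintro ⟨k, hk⟩
    let s (i : ℕ) : K := k * ∏ j ∈ range i, (a j / c j)
    have hrec : ∀ i < m, s i * a i = s (i + 1) * c i :=
      (forall_mul_eq_mul_iff_eq_mul_prod hc).2 fun i _ => by simp [s]
    exact ⟨s, fun i hi => (step s i hi).2 ⟨hrec i hi, (edge k i hi).1 (hk i hi)⟩⟩

end Field

lemma linearIndependent_e2_rotation (ψ : ℝ) :
    LinearIndependent ℝ ![e2 (cos ψ) (sin ψ), e2 (-(sin ψ)) (cos ψ)] := by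
  refine LinearIndependent.pair_iff.2 fun s t h => ?_
  have h0 : s * cos ψ + t * -sin ψ = 0 := by simpa [e2] using congr($h 0)
  have h1 : s * sin ψ + t * cos ψ = 0 := by simpa [e2] using congr($h 1)
  have hψ := sin_sq_add_cos_sq ψ
  exact ⟨by linear_combination cos ψ * h0 + sin ψ * h1 - s * hψ,
    by linear_combination cos ψ * h1 - sin ψ * h0 - t * hψ⟩

lemma e2_cos_sin_eq_rotation (φ ψ : ℝ) :
    e2 (cos φ) (sin φ) = cos (φ - ψ) • e2 (cos ψ) (sin ψ) +
      sin (φ - ψ) • e2 (-(sin ψ)) (cos ψ) := by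
  obtain ⟨θ, rfl⟩ : ∃ θ, φ = ψ + θ := ⟨φ - ψ, by ring⟩
  rw [add_sub_cancel_left]
  ext j
  fin_cases j <;> simp [e2, cos_add, sin_add] <;> ring

/-- The factor `sin (η i + θ i) / cos (η i) * C i` to which the `i`-th edge length of an axial
T-net is proportional, where `C i` is the product over `1 ≤ α ≤ i`. -/
noncomputable def edgeWeight (η θ : ℕ → ℝ) (i : ℕ) : ℝ :=
  sin (η i + θ i) / cos (η i) * ∏ α ∈ Icc 1 i, (cos (η α) / cos (θ α))

lemma edgeWeight_succ {η θ : ℕ → ℝ} {i : ℕ} (hcη : cos (η (i + 1)) ≠ 0) :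
    edgeWeight η θ (i + 1) = sin (η (i + 1) + θ (i + 1)) / cos (θ (i + 1)) *
      ∏ j ∈ range i, (cos (η (j + 1)) / cos (θ (j + 1))) := by
  rw [edgeWeight, prod_Icc_succ_top i.succ_pos, prod_Icc_one_eq_prod_range]
  field_simp

lemma exists_common_point_profile_lines_iff {m : ℕ} {φ ψ g η θ : ℕ → ℝ}
    (hη : ∀ i ∈ Icc 1 m, η i = ψ i - φ (i - 1))
    (hθ : ∀ i ∈ Icc 1 m, θ i = φ i - ψ i)
    (hcη : ∀ i ∈ Icc 1 m, cos (η i) ≠ 0)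
    (hcθ : ∀ i ∈ Icc 1 m, cos (θ i) ≠ 0)
    {τ : ℕ → EuclideanSpace ℝ (Fin 2)}
    (hτ : ∀ i, τ i = ∑ α ∈ Icc 1 i, g α • e2 (-(sin (ψ α))) (cos (ψ α))) :
    (∃ p, ∀ i ≤ m, ∃ s : ℝ, p = τ i + s • e2 (cos (φ i)) (sin (φ i))) ↔
      ∃ k, ∀ i ∈ Icc 1 m, g i = k * edgeWeight η θ i := by
  rw [forall_mem_Icc_one_iff] at hη hθ hcη hcθ
  simp only [Nat.add_sub_cancel] at hη
  have hτ_succ : ∀ i < m,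
      τ (i + 1) = τ i + g (i + 1) • e2 (-(sin (ψ (i + 1)))) (cos (ψ (i + 1))) := fun i _ => by
    rw [hτ, hτ, sum_Icc_succ_top i.succ_pos]
  have hφ_prev : ∀ i < m, e2 (cos (φ i)) (sin (φ i)) =
      cos (η (i + 1)) • e2 (cos (ψ (i + 1))) (sin (ψ (i + 1))) +
        (-sin (η (i + 1))) • e2 (-(sin (ψ (i + 1)))) (cos (ψ (i + 1))) := fun i hi => by
    rw [e2_cos_sin_eq_rotation (φ i) (ψ (i + 1)), ← neg_sub, cos_neg, sin_neg, hη i hi]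
  have hφ_next : ∀ i < m, e2 (cos (φ (i + 1))) (sin (φ (i + 1))) =
      cos (θ (i + 1)) • e2 (cos (ψ (i + 1))) (sin (ψ (i + 1))) +
        sin (θ (i + 1)) • e2 (-(sin (ψ (i + 1)))) (cos (ψ (i + 1))) := fun i hi => by
    rw [hθ i hi, ← e2_cos_sin_eq_rotation]
  rw [exists_common_point_iff_exists_forall_eq_mul hτ_succ
    (fun i _ => linearIndependent_e2_rotation (ψ (i + 1))) hφ_prev hφ_next hcθ,
    neg_surjective.exists]
  refine exists_congr fun k => ?_
  rw [forall_mem_Icc_one_iff]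
  refine forall₂_congr fun i hi => ?_
  rw [edgeWeight_succ (hcη i hi), sin_add]
  ring_nf

theorem stmt_3_general (m : ℕ) (hm : 1 ≤ m)
    (φ ψ g η θ : ℕ → ℝ)
    (hg : g 1 ≠ 0)
    (hη : ∀ i ∈ Icc 1 m, η i = ψ i - φ (i - 1))
    (hθ : ∀ i ∈ Icc 1 m, θ i = φ i - ψ i)
    (hcη : ∀ i ∈ Icc 1 m, cos (η i) ≠ 0)
    (hcθ : ∀ i ∈ Icc 1 m, cos (θ i) ≠ 0)
    (hs : sin (η 1 + θ 1) ≠ 0)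
    (τ : ℕ → EuclideanSpace ℝ (Fin 2))
    (hτ : ∀ i, τ i = ∑ α ∈ Icc 1 i, g α • e2 (-(sin (ψ α))) (cos (ψ α))) :
    (∃ p : EuclideanSpace ℝ (Fin 2), ∀ i ≤ m, ∃ s : ℝ,
        p = τ i + s • e2 (cos (φ i)) (sin (φ i))) ↔
    (∀ i ∈ Icc 1 m, g i / g 1 =
        (sin (η i + θ i) * cos (θ 1) * ∏ α ∈ Icc 1 i, (cos (η α) / cos (θ α))) /
        (sin (η 1 + θ 1) * cos (η i))) := by
  have h1 : 1 ∈ Icc 1 m := left_mem_Icc.2 hm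
  have hcη₁ := hcη 1 h1
  rw [exists_common_point_profile_lines_iff hη hθ hcη hcθ hτ,
    exists_forall_eq_mul_iff_forall_div_eq (P := (· ∈ Icc 1 m)) h1 hg]
  refine forall₂_congr fun i hi => ?_
  have hcη_i := hcη i hi
  rw [edgeWeight, edgeWeight, Icc_self, prod_singleton]
  field_simp

/-- **Theorem 2.9 (axiality criterion).** The profile lines `L i` of a T-net pass through a
common point iff `g i / g 1 = sin(η i + θ i) cos(θ 1) C i / (sin(η 1 + θ 1) cos(η i))`
for all `1 ≤ i ≤ m`. -/
theorem stmt_3 (m : ℕ) (hm : 1 ≤ m)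
    (φ ψ g η θ : ℕ → ℝ)
    (hφ0 : φ 0 = 0)
    (hg : ∀ i ∈ Icc 1 m, g i ≠ 0)
    (hη : ∀ i ∈ Icc 1 m, η i = ψ i - φ (i - 1))
    (hθ : ∀ i ∈ Icc 1 m, θ i = φ i - ψ i)
    (hηr : ∀ i ∈ Icc 1 m, η i ∈ Set.Ioo (-(π / 2)) (π / 2))
    (hθr : ∀ i ∈ Icc 1 m, θ i ∈ Set.Ioo (-(π / 2)) (π / 2))
    (hs : ∀ i ∈ Icc 1 m, sin (η i + θ i) ≠ 0)
    (τ : ℕ → EuclideanSpace ℝ (Fin 2))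
    (hτ : ∀ i, τ i = ∑ α ∈ Icc 1 i, g α • e2 (-(sin (ψ α))) (cos (ψ α))) :
    (∃ p : EuclideanSpace ℝ (Fin 2), ∀ i ≤ m, ∃ s : ℝ,
        p = τ i + s • e2 (cos (φ i)) (sin (φ i))) ↔
    (∀ i ∈ Icc 1 m, g i / g 1 =
        (sin (η i + θ i) * cos (θ 1) * ∏ α ∈ Icc 1 i, (cos (η α) / cos (θ α))) /
        (sin (η 1 + θ 1) * cos (η i))) :=
  stmt_3_general m hm φ ψ g η θ (hg 1 (left_mem_Icc.2 hm)) hη hθ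
    (fun i hi => (cos_pos_of_mem_Ioo (hηr i hi)).ne')
    (fun i hi => (cos_pos_of_mem_Ioo (hθr i hi)).ne') (hs 1 (left_mem_Icc.2 hm)) τ hτ
end

section
/- Fix m, n ≥ 1 and data φ, ψ : {1,…,m} → ℝ with φ_0 := 0, η_i := ψ_i − φ_{i−1} ∈ (−π/2, π/2), θ_i := φ_i − ψ_i ∈ (−π/2, π/2); f : {1,…,n} → ℝ; g : {1,…,m} → ℝ with g_α ≠ 0; and z : {0,…,n} → ℝ with z_0 = 0 and z_β ≠ z_{β−1} for all β. Set C_0 = 1, C_i = ∏_{α=1}^{i}(cos η_α / cos θ_α), F_0 = 0, F_j = ∑_{β=1}^{j} f_β. For t ∈ ℝ assume: C_i² + t > 0 for all 0 ≤ i ≤ m; C_{i−1}² sin²η_i ≤ C_{i−1}² + t and C_i² sin²θ_i ≤ C_i² + t for all 1 ≤ i ≤ m; and (z_β − z_{β−1})² ≥ t·f_β² for all 1 ≤ β ≤ n. Define C_i(t) = √(C_i² + t), η_i(t) = arcsin( C_{i−1} sin η_i / C_{i−1}(t) ), θ_i(t) = arcsin( C_i sin θ_i / C_i(t) ), φ_i(t)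 = ∑_{α=1}^{i} (η_α(t) + θ_α(t)) with φ_0(t) = 0, ψ_i(t) = φ_{i−1}(t) + η_i(t), z_j(t) = ∑_{β=1}^{j} sign(z_β − z_{β−1}) · √( (z_β − z_{β−1})² − t f_β² ), and σ_{ij}(t) = ( ∑_{α=1}^{i} g_α (−sin ψ_α(t), cos ψ_α(t)) + C_i(t) F_j (cos φ_i(t), sin φ_i(t)), z_j(t) ) ∈ ℝ³. Then for every admissible t, every 1 ≤ i ≤ m and 1 ≤ j ≤ n, and every pair of indices (a,b), (c,d) ∈ {(i−1,j−1), (i,j−1), (i,j), (i−1,j)}, the Euclidean distance ‖σ_{ab}(t) − σ_{cd}(t)‖ equals ‖σ_{ab}(0) − σ_{cd}(0)‖; in particular each face of σ(t) is congruent to the corresponding face of the T-hedron σ = σ(0). -/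
open Real Finset

/-- A vector in Euclidean space `ℝ³` given by its three coordinates. -/
noncomputable def e3 (x y z : ℝ) : EuclideanSpace ℝ (Fin 3) := !₂[x, y, z]

/-!
Seen in the frame turned by `ψ_i(t)`, a vertex of the `i`-th strip of faces has first coordinate
`D(t) F_j` with `D(t)² = (C_{i-1} cos η_i)² + t = (C_i cos θ_i)² + t`, because
`C_{i-1} cos η_i = C_i cos θ_i`, and a second coordinate that does not depend on `t`. Along a
profile edge the heights are chosen to compensate for the term `t f_j²` by which the square of the
first coordinate difference grows. So every distance within a face is that of the undeformed
T-hedron.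
-/

section Flexion

/-- The scaling factor `C_i(s)` of a profile at deformation parameter `s`, in terms of `c = C_i`. -/
noncomputable def flexScale (c s : ℝ) : ℝ := √(c ^ 2 + s)

/-- The signed angle between a profile plane and a face at deformation parameter `s`, for a profile
with scaling factor `c` and initial angle `a`: both `η_i(s)` and `θ_i(s)` have this form. -/
noncomputable def flexAngle (c a s : ℝ) : ℝ := arcsin (c * sin a / flexScale c s)

/-- The height difference at deformation parameter `s` of a profile edge with initial height
difference `h` and horizontal parameter `f`. -/
noncomputable def flexStep (h f s : ℝ) : ℝ := Real.sign h * √(h ^ 2 - s * f ^ 2)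

variable {c a h f s : ℝ}

theorem sq_flexScale (hs : 0 ≤ c ^ 2 + s) : flexScale c s ^ 2 = c ^ 2 + s :=
  sq_sqrt hs

theorem flexScale_pos (hs : 0 < c ^ 2 + s) : 0 < flexScale c s :=
  sqrt_pos.2 hs

theorem flexAngle_neg (c a s : ℝ) : flexAngle c (-a) s = -flexAngle c a s := by
  rw [flexAngle, flexAngle, sin_neg, mul_neg, neg_div, arcsin_neg]

theorem flexScale_mul_sin_flexAngle (hs : 0 < c ^ 2 + s)
    (ha : c ^ 2 * sin a ^ 2 ≤ c ^ 2 + s) :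
    flexScale c s * sin (flexAngle c a s) = c * sin a := by
  have hpos := flexScale_pos hs
  have hsin : |c * sin a / flexScale c s| ≤ 1 := by
    rw [← sq_le_one_iff_abs_le_one, div_pow, sq_flexScale hs.le, div_le_one hs, mul_pow]
    exact ha
  rw [flexAngle, sin_arcsin (abs_le.1 hsin).1 (abs_le.1 hsin).2, mul_div_cancel₀ _ hpos.ne']

theorem flexScale_mul_cos_flexAngle (hs : 0 < c ^ 2 + s) :
    flexScale c s * cos (flexAngle c a s) = flexScale (c * cos a) s := by
  have hpos := flexScale_pos hs
  have hsq : flexScale c s ^ 2 * (1 - (c * sin a / flexScale c s) ^ 2) = (c * cos a) ^ 2 + s := by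
    rw [mul_sub, ← mul_pow, mul_div_cancel₀ _ hpos.ne', sq_flexScale hs.le, mul_pow c (cos a),
      cos_sq']
    ring
  rw [flexAngle, cos_arcsin, ← sqrt_sq hpos.le, ← sqrt_mul (sq_nonneg _), sqrt_sq hpos.le, hsq,
    flexScale]

theorem sq_flexStep (hh : h ≠ 0) (hs : s * f ^ 2 ≤ h ^ 2) :
    flexStep h f s ^ 2 = h ^ 2 - s * f ^ 2 := by
  have hsign : Real.sign h ^ 2 = 1 := by
    rcases sign_apply_eq_of_ne_zero h hh with h' | h' <;> simp [h']
  rw [flexStep, mul_pow, hsign, one_mul, sq_sqrt (sub_nonneg.2 hs)]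

theorem sq_flexScale_mul_add_sq_flexStep (hc : 0 ≤ c ^ 2 + s) (hh : h ≠ 0)
    (hs : s * f ^ 2 ≤ h ^ 2) :
    (flexScale c s * f) ^ 2 + flexStep h f s ^ 2 = (c * f) ^ 2 + h ^ 2 := by
  rw [mul_pow, sq_flexScale hc, sq_flexStep hh hs]
  ring

end Flexion

/-- The point with coordinates `(x, y, h)` in the orthonormal frame with origin `(a, b, 0)` obtained
by turning the standard one by `ω` about the vertical axis. -/
noncomputable def framePoint (a b ω x y h : ℝ) : EuclideanSpace ℝ (Fin 3) :=
  e3 (a + x * cos ω - y * sin ω) (b + x * sin ω + y * cos ω) h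

theorem dist_framePoint (a b ω x y h x' y' h' : ℝ) :
    dist (framePoint a b ω x y h) (framePoint a b ω x' y' h') =
      √((x - x') ^ 2 + (y - y') ^ 2 + (h - h') ^ 2) := by
  rw [EuclideanSpace.dist_eq]
  simp only [framePoint, e3, Fin.sum_univ_three, Real.dist_eq, sq_abs, Matrix.cons_val]
  congr 1
  linear_combination ((x - x') ^ 2 + (y - y') ^ 2) * sin_sq_add_cos_sq ω

/-- The data of a T-hedron in the explicit representation of its vertices: the profile planes have
directions `φ i`, the edges of the trajectory polygon `j = 0` have normal directions `ψ i` and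
signed lengths `g i`, and the profiles have scaling factors `C i`, radii `F j` and heights `z j`.
Edges are numbered from `1`, edge `i` joining the vertices `i - 1` and `i`. Planarity of the
faces is not built in; it is `THedron.HasTrapezoidalStrip`. -/
structure THedron where
  ψ : ℕ → ℝ
  φ : ℕ → ℝ
  g : ℕ → ℝ
  C : ℕ → ℝ
  F : ℕ → ℝ
  z : ℕ → ℝ

namespace THedron

/-- The vertex `σ_{ij}` of a T-hedron. -/
noncomputable def vertex (T : THedron) (i j : ℕ) : EuclideanSpace ℝ (Fin 3) :=
  e3 ((∑ α ∈ Icc 1 i, T.g α * (-(sin (T.ψ α)))) + T.C i * T.F j * cos (T.φ i))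
    ((∑ α ∈ Icc 1 i, T.g α * cos (T.ψ α)) + T.C i * T.F j * sin (T.φ i)) (T.z j)

/-- The member at parameter `s` of the isometric deformation of a T-hedron. -/
noncomputable def flex (T : THedron) (s : ℝ) : THedron :=
  let η' i := flexAngle (T.C (i - 1)) (T.ψ i - T.φ (i - 1)) s
  let θ' i := flexAngle (T.C i) (T.φ i - T.ψ i) s
  let φ' i := ∑ α ∈ Icc 1 i, (η' α + θ' α)
  { ψ i := φ' (i - 1) + η' i
    φ := φ'
    g := T.g
    C i := flexScale (T.C i) s
    F := T.F
    z j := ∑ β ∈ Icc 1 j, flexStep (T.z β - T.z (β - 1)) (T.F β - T.F (β - 1)) s }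

/-- The condition that the faces between the profiles `k` and `k + 1` are trapezoids, in terms of
`C_k cos η_{k+1} = C_{k+1} cos θ_{k+1}`. -/
def HasTrapezoidalStrip (T : THedron) (k : ℕ) : Prop :=
  T.C k * cos (T.φ k - T.ψ (k + 1)) = T.C (k + 1) * cos (T.φ (k + 1) - T.ψ (k + 1))

/-- The condition that the formulas defining `T.flex s` make sense on the face with lower corner
`(k, l)`: the angles `-η_{k+1}` and `θ_{k+1}` are the `φ i - ψ (k + 1)` with `i ∈ {k, k + 1}`. -/
structure Admissible (T : THedron) (s : ℝ) (k l : ℕ) : Prop where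
  scale_pos : ∀ i ∈ ({k, k + 1} : Set ℕ), 0 < T.C i ^ 2 + s
  sin_sq_le : ∀ i ∈ ({k, k + 1} : Set ℕ),
    T.C i ^ 2 * sin (T.φ i - T.ψ (k + 1)) ^ 2 ≤ T.C i ^ 2 + s
  step_sq_le : s * (T.F (l + 1) - T.F l) ^ 2 ≤ (T.z (l + 1) - T.z l) ^ 2

variable (T : THedron) {s : ℝ} {k l i i' j j' : ℕ}

variable {T} in
theorem vertex_congr {T' : THedron} (hψ : ∀ α ∈ Icc 1 i, T.ψ α = T'.ψ α)
    (hg : ∀ α ∈ Icc 1 i, T.g α = T'.g α) (hφ : T.φ i = T'.φ i) (hC : T.C i = T'.C i)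
    (hF : T.F j = T'.F j) (hz : T.z j = T'.z j) : T.vertex i j = T'.vertex i j := by
  have hsin : ∑ α ∈ Icc 1 i, T.g α * (-(sin (T.ψ α))) =
      ∑ α ∈ Icc 1 i, T'.g α * (-(sin (T'.ψ α))) :=
    sum_congr rfl fun α hα => by rw [hg α hα, hψ α hα]
  have hcos : ∑ α ∈ Icc 1 i, T.g α * cos (T.ψ α) = ∑ α ∈ Icc 1 i, T'.g α * cos (T'.ψ α) :=
    sum_congr rfl fun α hα => by rw [hg α hα, hψ α hα]
  rw [vertex, vertex, hsin, hcos, hφ, hC, hF, hz]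

variable {T} in
theorem vertex_eq_flex_vertex {T' : THedron} {m : ℕ} {η' θ' : ℕ → ℝ}
    (hη' : ∀ α ∈ Icc 1 m, η' α = flexAngle (T.C (α - 1)) (T.ψ α - T.φ (α - 1)) s)
    (hθ' : ∀ α ∈ Icc 1 m, θ' α = flexAngle (T.C α) (T.φ α - T.ψ α) s)
    (hψ : ∀ α ∈ Icc 1 m, T'.ψ α = T'.φ (α - 1) + η' α)
    (hφ : ∀ a ≤ m, T'.φ a = ∑ α ∈ Icc 1 a, (η' α + θ' α))
    (hg : ∀ α ∈ Icc 1 m, T'.g α = T.g α) (hC : T'.C i = flexScale (T.C i) s)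
    (hF : T'.F j = T.F j) (hz : T'.z j = (T.flex s).z j) (hi : i ≤ m) :
    T'.vertex i j = (T.flex s).vertex i j := by
  have hφ_flex : ∀ a ≤ m, T'.φ a = (T.flex s).φ a := fun a ha =>
    (hφ a ha).trans <| sum_congr rfl fun α hα => by
      rw [hη' α (Icc_subset_Icc_right ha hα), hθ' α (Icc_subset_Icc_right ha hα)]
  have hψ_flex : ∀ α ∈ Icc 1 m, T'.ψ α = (T.flex s).ψ α := fun α hα => by
    rw [hψ α hα, hφ_flex (α - 1) ((Nat.sub_le α 1).trans (mem_Icc.1 hα).2), hη' α hα]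
    rfl
  exact vertex_congr (fun α hα => hψ_flex α (Icc_subset_Icc_right hi hα))
    (fun α hα => hg α (Icc_subset_Icc_right hi hα)) (hφ_flex i hi) hC hF hz

theorem vertex_eq_framePoint (hi : i ∈ ({k, k + 1} : Set ℕ)) (j : ℕ) :
    T.vertex i j = framePoint (∑ α ∈ Icc 1 k, T.g α * (-(sin (T.ψ α))))
      (∑ α ∈ Icc 1 k, T.g α * cos (T.ψ α)) (T.ψ (k + 1))
      (T.C i * cos (T.φ i - T.ψ (k + 1)) * T.F j)
      ((if i = k then 0 else T.g (k + 1)) + T.C i * sin (T.φ i - T.ψ (k + 1)) * T.F j)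
      (T.z j) := by
  have hcos := cos_add (T.ψ (k + 1)) (T.φ i - T.ψ (k + 1))
  have hsin := sin_add (T.ψ (k + 1)) (T.φ i - T.ψ (k + 1))
  rw [add_sub_cancel] at hcos hsin
  rw [vertex, framePoint, hcos, hsin]
  rcases hi with rfl | rfl
  · rw [if_pos rfl]
    congr 1 <;> ring
  · rw [if_neg k.succ_ne_self, sum_Icc_succ_top (by omega), sum_Icc_succ_top (by omega)]
    congr 1 <;> ring

theorem flex_φ_sub_ψ (hi : i ∈ ({k, k + 1} : Set ℕ)) (s : ℝ) :
    (T.flex s).φ i - (T.flex s).ψ (k + 1) = flexAngle (T.C i) (T.φ i - T.ψ (k + 1)) s := by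
  rcases hi with rfl | rfl
  · rw [← neg_sub (T.ψ _), flexAngle_neg]
    simp only [flex, Nat.add_sub_cancel]
    ring
  · simp only [flex, Nat.add_sub_cancel, sum_Icc_succ_top (Nat.le_add_left 1 k)]
    ring

theorem flex_z_succ_sub (l : ℕ) (s : ℝ) :
    (T.flex s).z (l + 1) - (T.flex s).z l =
      flexStep (T.z (l + 1) - T.z l) (T.F (l + 1) - T.F l) s := by
  simp only [flex, sum_Icc_succ_top (Nat.le_add_left 1 l), Nat.add_sub_cancel, add_sub_cancel_left]

theorem flex_profile_dist_sq {c : ℝ} (hc : 0 ≤ c ^ 2 + s) (hz : T.z (l + 1) ≠ T.z l)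
    (hs : s * (T.F (l + 1) - T.F l) ^ 2 ≤ (T.z (l + 1) - T.z l) ^ 2)
    (hj : j ∈ ({l, l + 1} : Set ℕ)) (hj' : j' ∈ ({l, l + 1} : Set ℕ)) :
    (flexScale c s * (T.F j - T.F j')) ^ 2 + ((T.flex s).z j - (T.flex s).z j') ^ 2 =
      (c * (T.F j - T.F j')) ^ 2 + (T.z j - T.z j') ^ 2 := by
  have hedge := sq_flexScale_mul_add_sq_flexStep hc (sub_ne_zero.2 hz) hs
  rw [← flex_z_succ_sub] at hedge
  rcases hj with rfl | rfl <;> rcases hj' with rfl | rfl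
  · simp
  · linear_combination hedge
  · exact hedge
  · simp

theorem dist_flex_vertex (hT : T.HasTrapezoidalStrip k) (hz : T.z (l + 1) ≠ T.z l)
    (hs : T.Admissible s k l)
    (hi : i ∈ ({k, k + 1} : Set ℕ)) (hi' : i' ∈ ({k, k + 1} : Set ℕ))
    (hj : j ∈ ({l, l + 1} : Set ℕ)) (hj' : j' ∈ ({l, l + 1} : Set ℕ)) :
    dist ((T.flex s).vertex i j) ((T.flex s).vertex i' j') =
      dist (T.vertex i j) (T.vertex i' j') := by
  set c := T.C k * cos (T.φ k - T.ψ (k + 1)) with hc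
  have hcos : ∀ a ∈ ({k, k + 1} : Set ℕ), T.C a * cos (T.φ a - T.ψ (k + 1)) = c := by
    rintro a (rfl | rfl)
    exacts [rfl, hT.symm]
  have hflexCos : ∀ a ∈ ({k, k + 1} : Set ℕ),
      (T.flex s).C a * cos ((T.flex s).φ a - (T.flex s).ψ (k + 1)) = flexScale c s := by
    intro a ha
    rw [T.flex_φ_sub_ψ ha, ← hcos a ha]
    exact flexScale_mul_cos_flexAngle (hs.scale_pos a ha)
  have hflexSin : ∀ a ∈ ({k, k + 1} : Set ℕ),
      (T.flex s).C a * sin ((T.flex s).φ a - (T.flex s).ψ (k + 1)) =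
        T.C a * sin (T.φ a - T.ψ (k + 1)) := by
    intro a ha
    rw [T.flex_φ_sub_ψ ha]
    exact flexScale_mul_sin_flexAngle (hs.scale_pos a ha) (hs.sin_sq_le a ha)
  have hcs : 0 ≤ c ^ 2 + s := by
    rw [hc, mul_pow, cos_sq']
    linarith [hs.sin_sq_le k (by simp)]
  rw [vertex_eq_framePoint _ hi, vertex_eq_framePoint _ hi', dist_framePoint,
    T.vertex_eq_framePoint hi, T.vertex_eq_framePoint hi', dist_framePoint,
    hflexCos i hi, hflexCos i' hi', hflexSin i hi, hflexSin i' hi', hcos i hi, hcos i' hi']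
  congr 1
  have hprofile := T.flex_profile_dist_sq hcs hz hs.step_sq_le hj hj'
  simp only [flex] at hprofile ⊢
  linear_combination hprofile

end THedron

theorem prod_Icc_div_mul {u v : ℕ → ℝ} {k : ℕ} (hv : v (k + 1) ≠ 0) :
    (∏ α ∈ Icc 1 (k + 1), u α / v α) * v (k + 1) = (∏ α ∈ Icc 1 k, u α / v α) * u (k + 1) := by
  rw [prod_Icc_succ_top (Nat.le_add_left 1 k), mul_assoc, div_mul_cancel₀ _ hv]

theorem fst_mem_and_snd_mem_of_mem_corners {k l : ℕ} {p : ℕ × ℕ}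
    (hp : p ∈ ({(k, l), (k + 1, l), (k + 1, l + 1), (k, l + 1)} : Set (ℕ × ℕ))) :
    p.1 ∈ ({k, k + 1} : Set ℕ) ∧ p.2 ∈ ({l, l + 1} : Set ℕ) := by
  rcases hp with rfl | rfl | rfl | rfl <;> simp

/-- The comparison is with the initial T-hedron itself; the member of the deformation at `t = 0`
is congruent to it but need not equal it, since `arcsin` recovers only angles in
`[-π / 2, π / 2]`. -/
theorem stmt_4_general (m n : ℕ) (φ ψ f g z η θ C F : ℕ → ℝ)
    (hη : ∀ i ∈ Icc 1 m, η i = ψ i - φ (i - 1))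
    (hθ : ∀ i ∈ Icc 1 m, θ i = φ i - ψ i)
    (hθ_cos : ∀ i ∈ Icc 1 m, cos (θ i) ≠ 0)
    (hz_ne : ∀ β ∈ Icc 1 n, z β ≠ z (β - 1))
    (hC : ∀ i, C i = ∏ α ∈ Icc 1 i, (cos (η α) / cos (θ α)))
    (hF : ∀ j, F j = ∑ β ∈ Icc 1 j, f β)
    (t : ℝ) (Ct ηt θt φt ψt zt : ℕ → ℝ)
    (hCt : ∀ i, Ct i = √(C i ^ 2 + t))
    (hηt : ∀ i ∈ Icc 1 m, ηt i = arcsin (C (i - 1) * sin (η i) / Ct (i - 1)))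
    (hθt : ∀ i ∈ Icc 1 m, θt i = arcsin (C i * sin (θ i) / Ct i))
    (hφt : ∀ i, φt i = ∑ α ∈ Icc 1 i, (ηt α + θt α))
    (hψt : ∀ i ∈ Icc 1 m, ψt i = φt (i - 1) + ηt i)
    (hzt : ∀ j, zt j = ∑ β ∈ Icc 1 j, Real.sign (z β - z (β - 1)) *
      √((z β - z (β - 1)) ^ 2 - t * f β ^ 2))
    (htC : ∀ i ≤ m, 0 < C i ^ 2 + t)
    (htη : ∀ i ∈ Icc 1 m, C (i - 1) ^ 2 * sin (η i) ^ 2 ≤ C (i - 1) ^ 2 + t)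
    (htθ : ∀ i ∈ Icc 1 m, C i ^ 2 * sin (θ i) ^ 2 ≤ C i ^ 2 + t)
    (htz : ∀ β ∈ Icc 1 n, t * f β ^ 2 ≤ (z β - z (β - 1)) ^ 2) :
    ∀ i ∈ Icc 1 m, ∀ j ∈ Icc 1 n,
      ∀ p ∈ ({(i - 1, j - 1), (i, j - 1), (i, j), (i - 1, j)} : Set (ℕ × ℕ)),
      ∀ q ∈ ({(i - 1, j - 1), (i, j - 1), (i, j), (i - 1, j)} : Set (ℕ × ℕ)),
        dist ((THedron.mk ψt φt g Ct F zt).vertex p.1 p.2)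
            ((THedron.mk ψt φt g Ct F zt).vertex q.1 q.2) =
          dist ((THedron.mk ψ φ g C F z).vertex p.1 p.2)
            ((THedron.mk ψ φ g C F z).vertex q.1 q.2) := by
  intro i hi j hj p hp q hq
  obtain ⟨k, rfl⟩ := Nat.exists_eq_add_of_le' (mem_Icc.1 hi).1
  obtain ⟨l, rfl⟩ := Nat.exists_eq_add_of_le' (mem_Icc.1 hj).1
  have hkm : k + 1 ≤ m := (mem_Icc.1 hi).2
  have hle : ∀ a ∈ ({k, k + 1} : Set ℕ), a ≤ m := by
    rintro a (rfl | rfl) <;> omega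
  let T := THedron.mk ψ φ g C F z
  have hf : ∀ b, F (b + 1) - F b = f (b + 1) := fun b => by
    rw [hF, hF, sum_Icc_succ_top (Nat.le_add_left 1 b), add_sub_cancel_left]
  have hη_flex : ∀ α ∈ Icc 1 m, ηt α = flexAngle (C (α - 1)) (ψ α - φ (α - 1)) t := fun α hα => by
    rw [hηt α hα, hη α hα, hCt, flexAngle, flexScale]
  have hθ_flex : ∀ α ∈ Icc 1 m, θt α = flexAngle (C α) (φ α - ψ α) t := fun α hα => by
    rw [hθt α hα, hθ α hα, hCt, flexAngle, flexScale]
  have hz_flex : ∀ b, zt b = (T.flex t).z b := fun b =>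
    (hzt b).trans <| sum_congr rfl fun β hβ => by
      obtain ⟨β, rfl⟩ := Nat.exists_eq_add_of_le' (mem_Icc.1 hβ).1
      rw [← hf β]
      rfl
  have hvertex : ∀ a ≤ m, ∀ b,
      (THedron.mk ψt φt g Ct F zt).vertex a b = (T.flex t).vertex a b := fun a ha b =>
    THedron.vertex_eq_flex_vertex hη_flex hθ_flex hψt (fun a _ => hφt a) (fun _ _ => rfl) (hCt a)
      rfl (hz_flex b) ha
  have hη_neg : φ k - ψ (k + 1) = -η (k + 1) := by rw [hη _ hi, neg_sub, Nat.add_sub_cancel]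
  have hstrip : T.HasTrapezoidalStrip k := by
    change C k * cos (φ k - ψ (k + 1)) = C (k + 1) * cos (φ (k + 1) - ψ (k + 1))
    rw [hη_neg, cos_neg, ← hθ _ hi, hC, hC]
    exact (prod_Icc_div_mul (hθ_cos _ hi)).symm
  have hadm : T.Admissible t k l := by
    refine ⟨fun a ha => htC a (hle a ha), ?_, (hf l).symm ▸ htz _ hj⟩
    rintro a (rfl | rfl)
    · change C a ^ 2 * sin (φ a - ψ (a + 1)) ^ 2 ≤ C a ^ 2 + t
      rw [hη_neg, sin_neg, neg_sq]
      exact htη _ hi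
    · exact hθ _ hi ▸ htθ _ hi
  obtain ⟨hp₁, hp₂⟩ := fst_mem_and_snd_mem_of_mem_corners hp
  obtain ⟨hq₁, hq₂⟩ := fst_mem_and_snd_mem_of_mem_corners hq
  rw [hvertex _ (hle _ hp₁), hvertex _ (hle _ hq₁)]
  exact T.dist_flex_vertex hstrip (hz_ne _ hj) hadm hp₁ hq₁ hp₂ hq₂

/-- **Theorem 3.1.** The explicit isometric deformation of a general T-hedron: for every
admissible deformation parameter `t`, each face of the deformed T-hedron `σ t` is congruent
to the corresponding face of the original T-hedron `σ 0` (all six pairwise distances among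
the four vertices of a face are preserved). -/
theorem stmt_4 (m n : ℕ) (hm : 1 ≤ m) (hn : 1 ≤ n)
    (φ ψ f g z η θ C F : ℕ → ℝ)
    (hφ0 : φ 0 = 0)
    (hη : ∀ i ∈ Icc 1 m, η i = ψ i - φ (i - 1))
    (hθ : ∀ i ∈ Icc 1 m, θ i = φ i - ψ i)
    (hηr : ∀ i ∈ Icc 1 m, η i ∈ Set.Ioo (-(π / 2)) (π / 2))
    (hθr : ∀ i ∈ Icc 1 m, θ i ∈ Set.Ioo (-(π / 2)) (π / 2))
    (hg : ∀ α ∈ Icc 1 m, g α ≠ 0)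
    (hz0 : z 0 = 0)
    (hzne : ∀ β ∈ Icc 1 n, z β ≠ z (β - 1))
    (hC : ∀ i, C i = ∏ α ∈ Icc 1 i, (cos (η α) / cos (θ α)))
    (hF : ∀ j, F j = ∑ β ∈ Icc 1 j, f β)
    (Ct : ℝ → ℕ → ℝ) (ηt θt φt ψt zt : ℝ → ℕ → ℝ)
    (hCt : ∀ s i, Ct s i = Real.sqrt (C i ^ 2 + s))
    (hηt : ∀ s, ∀ i ∈ Icc 1 m, ηt s i = arcsin (C (i - 1) * sin (η i) / Ct s (i - 1)))
    (hθt : ∀ s, ∀ i ∈ Icc 1 m, θt s i = arcsin (C i * sin (θ i) / Ct s i))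
    (hφt : ∀ s i, φt s i = ∑ α ∈ Icc 1 i, (ηt s α + θt s α))
    (hψt : ∀ s, ∀ i ∈ Icc 1 m, ψt s i = φt s (i - 1) + ηt s i)
    (hzt : ∀ s j, zt s j = ∑ β ∈ Icc 1 j, Real.sign (z β - z (β - 1)) *
        Real.sqrt ((z β - z (β - 1)) ^ 2 - s * f β ^ 2))
    (σ : ℝ → ℕ → ℕ → EuclideanSpace ℝ (Fin 3))
    (hσ : ∀ s i j, σ s i j =
        e3 ((∑ α ∈ Icc 1 i, g α * (-(sin (ψt s α)))) + Ct s i * F j * cos (φt s i))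
           ((∑ α ∈ Icc 1 i, g α * cos (ψt s α)) + Ct s i * F j * sin (φt s i))
           (zt s j))
    (t : ℝ)
    (htC : ∀ i ≤ m, 0 < C i ^ 2 + t)
    (htη : ∀ i ∈ Icc 1 m, C (i - 1) ^ 2 * sin (η i) ^ 2 ≤ C (i - 1) ^ 2 + t)
    (htθ : ∀ i ∈ Icc 1 m, C i ^ 2 * sin (θ i) ^ 2 ≤ C i ^ 2 + t)
    (htz : ∀ β ∈ Icc 1 n, t * f β ^ 2 ≤ (z β - z (β - 1)) ^ 2) :
    ∀ i ∈ Icc 1 m, ∀ j ∈ Icc 1 n,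
      ∀ p ∈ ({(i - 1, j - 1), (i, j - 1), (i, j), (i - 1, j)} : Set (ℕ × ℕ)),
      ∀ q ∈ ({(i - 1, j - 1), (i, j - 1), (i, j), (i - 1, j)} : Set (ℕ × ℕ)),
        dist (σ t p.1 p.2) (σ t q.1 q.2) = dist (σ 0 p.1 p.2) (σ 0 q.1 q.2) := by
  intro i hi j hj p hp q hq
  have hcosθ : ∀ a ∈ Icc 1 m, 0 < cos (θ a) := fun a ha => cos_pos_of_mem_Ioo (hθr a ha)
  have hCpos : ∀ a ≤ m, 0 < C a := fun a ha => by
    rw [hC]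
    exact prod_pos fun b hb => div_pos (cos_pos_of_mem_Ioo (hηr b (Icc_subset_Icc_right ha hb)))
      (hcosθ b (Icc_subset_Icc_right ha hb))
  have hsin : ∀ c a : ℝ, c ^ 2 * sin a ^ 2 ≤ c ^ 2 + 0 := fun c a => by
    simpa using mul_le_of_le_one_right (sq_nonneg c) (sin_sq_le_one a)
  have hinitial := fun s => stmt_4_general m n φ ψ f g z η θ C F hη hθ
    (fun a ha => (hcosθ a ha).ne') hzne hC hF s (Ct s) (ηt s) (θt s) (φt s) (ψt s) (zt s)
    (hCt s) (hηt s) (hθt s) (hφt s) (hψt s) (hzt s)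
  have hcongr_t := hinitial t htC htη htθ htz i hi j hj p hp q hq
  have hcongr_zero := hinitial 0 (fun a ha => by simpa using pow_pos (hCpos a ha) 2)
    (fun _ _ => hsin _ _) (fun _ _ => hsin _ _) (fun _ _ => by simpa using sq_nonneg _)
    i hi j hj p hp q hq
  simp only [hσ]
  exact hcongr_t.trans hcongr_zero.symm
end
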